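/- There exists an absolute constant c > 0 such that for every n ≥ m_0, the Nörlund logarithmic kernel satisfies ∫_0^1 |F_{p_n}(x)| dx ≥ c·n. -/

import Mathlib

open MeasureTheory Filter

noncomputable section

/-- The unit cube `[0,1)^d`. -/
def unitCube (d : ℕ) : Set (Fin d → ℝ) := Set.univ.pi fun _ => Set.Ico (0:ℝ) 1

/-- Lebesgue measure restricted to the unit cube `[0,1)^d`. -/
def cubeMeasure (d : ℕ) : Measure (Fin d → ℝ) := volume.restrict (unitCube d)

/-- The `1`-periodic function equal to `1` on `[0,1/2)` and to `-1` on `[1/2,1)`. -/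
def r0 (x : ℝ) : ℝ := if Int.fract x < 1/2 then 1 else -1

/-- The Rademacher functions. -/
def rademacher (n : ℕ) (x : ℝ) : ℝ := r0 (2 ^ n * x)

/-- The Walsh functions (in Paley enumeration, via binary digits). -/
def walsh (n : ℕ) (x : ℝ) : ℝ :=
  ∏ k ∈ Finset.range (n + 1), if n.testBit k then rademacher k x else 1

/-- The Walsh–Dirichlet kernel `D_n`. -/
def dirichletKernel (n : ℕ) (x : ℝ) : ℝ := ∑ k ∈ Finset.range n, walsh k x

/-- `l_n = ∑_{k=1}^{n-1} 1/k`. -/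
def logSum (n : ℕ) : ℝ := ∑ k ∈ Finset.Icc 1 (n - 1), (1 : ℝ) / k

/-- The Nörlund logarithmic kernel `F_n`. -/
def FKernel (n : ℕ) (u : ℝ) : ℝ :=
  (1 / logSum n) * ∑ i ∈ Finset.Ico 1 n, dirichletKernel (n - i) u / i

/-- The Riesz logarithmic kernel `G_n`. -/
def GKernel (n : ℕ) (u : ℝ) : ℝ :=
  (1 / logSum n) * ∑ i ∈ Finset.Ico 1 n, dirichletKernel i u / i

/-- Walsh–Fourier coefficient of `f` on the unit cube. -/
def walshCoef {d : ℕ} (f : (Fin d → ℝ) → ℝ) (j : Fin d → ℕ) : ℝ :=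
  ∫ x, f x * ∏ i, walsh (j i) (x i) ∂(cubeMeasure d)

/-- Rectangular partial sums of the multiple Walsh–Fourier series. -/
def rectPartialSum {d : ℕ} (f : (Fin d → ℝ) → ℝ) (N : Fin d → ℕ) (x : Fin d → ℝ) : ℝ :=
  ∑ j ∈ Fintype.piFinset (fun i => Finset.range (N i)),
    walshCoef f j * ∏ i, walsh (j i) (x i)

/-- The mixed logarithmic means `(L_{n_B} ∘ R_{n_{B'}})(f)`. -/
def mixedLogMean {d : ℕ} (B : Finset (Fin d)) (f : (Fin d → ℝ) → ℝ)
    (n : Fin d → ℕ) (x : Fin d → ℝ) : ℝ :=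
  (∏ j, logSum (n j))⁻¹ *
    ∑ i ∈ Fintype.piFinset (fun j => Finset.Ico 1 (n j)),
      rectPartialSum f (fun j => if j ∈ B then n j - i j else i j) x / ∏ j, (i j : ℝ)

/-- A Young function: convex, continuous, even, vanishing at `0`, with
`Q(u)/u → ∞` at `+∞` and `Q(u)/u → 0` at `0`. -/
structure YoungFunction where
  toFun : ℝ → ℝ
  nonneg : ∀ u, 0 ≤ toFun u
  convexOn : ConvexOn ℝ Set.univ toFun
  continuous : Continuous toFun
  even : ∀ u, toFun (-u) = toFun u
  map_zero : toFun 0 = 0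
  tendsto_atTop : Tendsto (fun u => toFun u / u) atTop atTop
  tendsto_zero : Tendsto (fun u => toFun u / u) (nhdsWithin 0 {(0:ℝ)}ᶜ) (nhds 0)

/-- The set of admissible constants `k` in the Luxemburg norm of `f`. -/
def orliczSet {d : ℕ} (Q : YoungFunction) (f : (Fin d → ℝ) → ℝ) : Set ℝ :=
  {k | 0 < k ∧ Integrable (fun x => Q.toFun (|f x| / k)) (cubeMeasure d) ∧
    ∫ x, Q.toFun (|f x| / k) ∂(cubeMeasure d) ≤ 1}

/-- `f` belongs to the Orlicz space `L_Q(I^d)`. -/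
def MemOrlicz {d : ℕ} (Q : YoungFunction) (f : (Fin d → ℝ) → ℝ) : Prop :=
  Measurable f ∧ (orliczSet Q f).Nonempty

/-- The Luxemburg norm on the Orlicz space `L_Q(I^d)`. -/
def orliczNorm {d : ℕ} (Q : YoungFunction) (f : (Fin d → ℝ) → ℝ) : ℝ :=
  sInf (orliczSet Q f)

/-- `p_n = 2^{2n} + 2^{2n-2} + ⋯ + 2^0`. -/
def pIdx (n : ℕ) : ℕ := ∑ k ∈ Finset.range (n + 1), 4 ^ k

/-- `m̃ = ⌊ l_{p_{⌊m/2⌋}-1}/16 - 2^15 ⌋`. -/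
def mTilde (m : ℕ) : ℤ := ⌊logSum (pIdx (m / 2) - 1) / 16 - 2 ^ 15⌋

/-- `m₀ = min{m : m̃ > 1}`. -/
def m₀ : ℕ := sInf {m : ℕ | 1 < mTilde m}

/-- The set `Ω_n`. -/
def Omega (n : ℕ) : Set ℝ :=
  ⋃ m ∈ Finset.Icc n (2 * n),
    Set.Ico ((2:ℝ) ^ (-(m:ℤ) - 1) + (2:ℝ) ^ (-(m:ℤ) - mTilde m)) ((2:ℝ) ^ (-(m:ℤ)))

/-- `k`-th binary digit of `x` (the expansion not terminating in `1`'s). -/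
def binDigit (k : ℕ) (x : ℝ) : ℕ := (⌊x * 2 ^ (k + 1)⌋).toNat % 2

/-- Dyadic addition on `[0,1)`. -/
def dyadicAdd (x t : ℝ) : ℝ :=
  ∑' k : ℕ, |(binDigit k x : ℝ) - (binDigit k t : ℝ)| / 2 ^ (k + 1)

/-- Dyadic convolution `f ∗ K` on `[0,1)`. -/
def dyadicConv (f K : ℝ → ℝ) (x : ℝ) : ℝ :=
  ∫ t in Set.Ico (0:ℝ) 1, f t * K (dyadicAdd x t)

/-- Lebesgue measure restricted to `[0,1)`. -/
def unitMeasure : Measure ℝ := volume.restrict (Set.Ico (0:ℝ) 1)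

/-- A set `A ⊆ L_Q(I^d)` is nowhere dense w.r.t. the Luxemburg norm. -/
def OrliczNowhereDense {d : ℕ} (Q : YoungFunction) (A : Set ((Fin d → ℝ) → ℝ)) : Prop :=
  ∀ f, MemOrlicz Q f → ∀ ε > 0, ∃ g, MemOrlicz Q g ∧ ∃ δ > 0,
    (∀ h, MemOrlicz Q h → orliczNorm Q (h - g) < δ → orliczNorm Q (h - f) < ε) ∧
    (∀ h, MemOrlicz Q h → orliczNorm Q (h - g) < δ → h ∉ A)

/-- A set `A ⊆ L_Q(I^d)` is of first Baire category (meager) w.r.t. the Luxemburg norm. -/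
def OrliczMeager {d : ℕ} (Q : YoungFunction) (A : Set ((Fin d → ℝ) → ℝ)) : Prop :=
  ∃ F : ℕ → Set ((Fin d → ℝ) → ℝ), (∀ k, OrliczNowhereDense Q (F k)) ∧ A ⊆ ⋃ k, F k

/-!
Let `x` lie in the top quarter of `[0, 2^{-m})`, so that its binary expansion starts with `m` zeros
followed by two ones. Then `D_{2^{m+1}}(x) = 0`, which makes `j ↦ D_j(x)` periodic up to signs with
period `2^{m+1}` and bounded by `2^m`, and its means over blocks of length `2^{m+2}` vanish.
Write `p = 2^{m+1} q + u` with `q` odd and `u` comparable to `2^m`. In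
`∑_{j < p} D_j(x) / (p - j)` the cancellation inside the blocks leaves only `O(u)` from the indices
`j < 2^{m+1} q`, while the last `u` indices contribute `± ∑_{k < u} k / (u - k)`, of size `u log u`.

For `p = p_n` this applies with `m = 2t + 1`, `u = p_t`, for every `t < n`. Since `u ≈ 4^t` and the
quarter has length `≈ 4^{-t}`, the `t`-th quarter contributes `≈ t / n` to the integral of
`|F_{p_n}|`; summing over `t < n` gives `≈ n`. The error terms spoil this only for bounded `n`,
where the contribution of `[0, 2^{-2n-1})` suffices.
-/

section Walsh

variable {n N m b : ℕ} {x : ℝ}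

lemma abs_rademacher (n : ℕ) (x : ℝ) : |rademacher n x| = 1 := by
  unfold rademacher r0
  split_ifs <;> simp

lemma abs_walsh (n : ℕ) (x : ℝ) : |walsh n x| = 1 := by
  unfold walsh
  rw [Finset.abs_prod]
  refine Finset.prod_eq_one fun k _ => ?_
  split_ifs
  · exact abs_rademacher k x
  · exact abs_one

lemma walsh_zero (x : ℝ) : walsh 0 x = 1 := by simp [walsh]

lemma walsh_eq_prod_range (hn : n < 2 ^ N) (x : ℝ) :
    walsh n x = ∏ k ∈ Finset.range N, if n.testBit k then rademacher k x else 1 := by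
  have factor_eq_one {M : ℕ} (hM : n < 2 ^ M) :
      ∀ k ≥ M, (if n.testBit k then rademacher k x else 1) = 1 := fun k hk => by
    simp [Nat.testBit_lt_two_pow (hM.trans_le (Nat.pow_le_pow_right two_pos hk))]
  rcases le_total N (n + 1) with hle | hle
  · exact Finset.eventually_constant_prod (factor_eq_one hn) hle
  · exact (Finset.eventually_constant_prod
      (factor_eq_one (n.lt_succ_self.trans Nat.lt_two_pow_self)) hle).symm

lemma walsh_two_pow_mul_add (a : ℕ) (hb : b < 2 ^ N) (x : ℝ) :
    walsh (2 ^ N * a + b) x = walsh (2 ^ N * a) x * walsh b x := by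
  have split {b : ℕ} (hb : b < 2 ^ N) : walsh (2 ^ N * a + b) x =
      (∏ k ∈ Finset.range a, if a.testBit k then rademacher (N + k) x else 1) * walsh b x := by
    have hlt : 2 ^ N * a + b < 2 ^ (N + a) := by
      have ha : a < 2 ^ a := Nat.lt_two_pow_self
      rw [pow_add]
      nlinarith
    rw [walsh_eq_prod_range hlt, Finset.prod_range_add, mul_comm, walsh_eq_prod_range hb]
    congr 1 <;> refine Finset.prod_congr rfl fun k hk => ?_
    · simp [Nat.testBit_two_pow_mul_add _ hb]
    · simp [Nat.testBit_two_pow_mul_add _ hb, Finset.mem_range.1 hk]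
  have split_zero := split (Nat.two_pow_pos N)
  rw [add_zero, walsh_zero, mul_one] at split_zero
  rw [split hb, split_zero]

lemma walsh_two_pow (N : ℕ) (x : ℝ) : walsh (2 ^ N) x = rademacher N x := by
  rw [walsh_eq_prod_range (Nat.pow_lt_pow_right one_lt_two N.lt_succ_self),
    Finset.prod_range_succ, Finset.prod_eq_one]
  · simp
  · intro k hk
    simp [Nat.testBit_two_pow_of_ne (Finset.mem_range.1 hk).ne']

lemma walsh_eq_one_of_lt (hx : ∀ k < m, rademacher k x = 1) (hn : n < 2 ^ m) :
    walsh n x = 1 := by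
  rw [walsh_eq_prod_range hn]
  refine Finset.prod_eq_one fun k hk => ?_
  rw [hx k (Finset.mem_range.1 hk), ite_self]

end Walsh

section Dirichlet

variable {N m b j : ℕ} {x : ℝ}

lemma dirichletKernel_zero (x : ℝ) : dirichletKernel 0 x = 0 := by simp [dirichletKernel]

lemma dirichletKernel_eq_natCast (hx : ∀ k < m, rademacher k x = 1) (hj : j ≤ 2 ^ m) :
    dirichletKernel j x = j := by
  unfold dirichletKernel
  rw [Finset.sum_congr rfl fun k hk =>
    walsh_eq_one_of_lt hx ((Finset.mem_range.1 hk).trans_le hj)]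
  simp

lemma abs_dirichletKernel_sub_le (hbj : b ≤ j) (x : ℝ) :
    |dirichletKernel j x - dirichletKernel b x| ≤ j - b := by
  unfold dirichletKernel
  rw [← Finset.sum_Ico_eq_sub _ hbj]
  refine (Finset.abs_sum_le_sum_abs _ _).trans_eq ?_
  simp [abs_walsh, Nat.cast_sub hbj]

lemma abs_dirichletKernel_le (j : ℕ) (x : ℝ) : |dirichletKernel j x| ≤ j := by
  simpa [dirichletKernel_zero] using abs_dirichletKernel_sub_le j.zero_le x

lemma dirichletKernel_two_pow_mul_add (a : ℕ) (hb : b ≤ 2 ^ N) (x : ℝ) :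
    dirichletKernel (2 ^ N * a + b) x =
      dirichletKernel (2 ^ N * a) x + walsh (2 ^ N * a) x * dirichletKernel b x := by
  unfold dirichletKernel
  rw [Finset.sum_range_add, Finset.mul_sum]
  congr 1
  exact Finset.sum_congr rfl fun k hk =>
    walsh_two_pow_mul_add a ((Finset.mem_range.1 hk).trans_le hb) x

lemma dirichletKernel_two_pow_add (hb : b ≤ 2 ^ N) (x : ℝ) :
    dirichletKernel (2 ^ N + b) x =
      dirichletKernel (2 ^ N) x + rademacher N x * dirichletKernel b x := by
  simpa only [mul_one, walsh_two_pow] using dirichletKernel_two_pow_mul_add 1 hb x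

lemma dirichletKernel_two_pow_succ (N : ℕ) (x : ℝ) :
    dirichletKernel (2 ^ (N + 1)) x = (1 + rademacher N x) * dirichletKernel (2 ^ N) x := by
  rw [pow_succ, mul_two, dirichletKernel_two_pow_add le_rfl]
  ring

lemma dirichletKernel_two_pow_succ_eq_zero (hx : rademacher N x = -1) :
    dirichletKernel (2 ^ (N + 1)) x = 0 := by
  rw [dirichletKernel_two_pow_succ, hx]
  ring

lemma dirichletKernel_two_pow_mul_eq_zero (hx : dirichletKernel (2 ^ N) x = 0) (a : ℕ) :
    dirichletKernel (2 ^ N * a) x = 0 := by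
  induction a with
  | zero => exact dirichletKernel_zero x
  | succ a ih =>
    rw [mul_add_one, dirichletKernel_two_pow_mul_add a le_rfl, ih, hx, mul_zero, add_zero]

lemma dirichletKernel_two_pow_mul_add_of_eq_zero (hx : dirichletKernel (2 ^ N) x = 0) (a : ℕ)
    (hb : b ≤ 2 ^ N) :
    dirichletKernel (2 ^ N * a + b) x = walsh (2 ^ N * a) x * dirichletKernel b x := by
  rw [dirichletKernel_two_pow_mul_add a hb, dirichletKernel_two_pow_mul_eq_zero hx, zero_add]

lemma abs_dirichletKernel_le_two_pow (hx : dirichletKernel (2 ^ (m + 1)) x = 0) (j : ℕ) :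
    |dirichletKernel j x| ≤ 2 ^ m := by
  obtain ⟨b, hb, hj⟩ : ∃ b ≤ 2 ^ (m + 1), |dirichletKernel j x| = |dirichletKernel b x| := by
    have hb := (Nat.mod_lt j (Nat.two_pow_pos (m + 1))).le
    refine ⟨j % 2 ^ (m + 1), hb, ?_⟩
    conv_lhs => rw [← Nat.div_add_mod j (2 ^ (m + 1))]
    rw [dirichletKernel_two_pow_mul_add_of_eq_zero hx _ hb, abs_mul, abs_walsh, one_mul]
  have from_left := abs_dirichletKernel_le b x
  have from_right := abs_dirichletKernel_sub_le hb x
  rw [hx, zero_sub, abs_neg] at from_right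
  push_cast [pow_succ] at from_right
  rw [hj]
  linarith

lemma sum_range_dirichletKernel_eq_zero (hx : dirichletKernel (2 ^ N) x = 0)
    (hN : rademacher N x = -1) :
    ∑ b ∈ Finset.range (2 ^ (N + 1)), dirichletKernel b x = 0 := by
  rw [pow_succ, mul_two, Finset.sum_range_add, ← Finset.sum_add_distrib]
  refine Finset.sum_eq_zero fun b hb => ?_
  rw [dirichletKernel_two_pow_add (Finset.mem_range.1 hb).le, hx, hN]
  ring

lemma sum_block_dirichletKernel_eq_zero (hx : dirichletKernel (2 ^ N) x = 0)
    (hN : rademacher N x = -1) (a : ℕ) :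
    ∑ b ∈ Finset.range (2 ^ (N + 1)), dirichletKernel (2 ^ (N + 1) * a + b) x = 0 := by
  have hx' := dirichletKernel_two_pow_succ_eq_zero hN
  rw [Finset.sum_congr rfl fun b hb => dirichletKernel_two_pow_mul_add_of_eq_zero hx' a
    (Finset.mem_range.1 hb).le, ← Finset.mul_sum, sum_range_dirichletKernel_eq_zero hx hN, mul_zero]

end Dirichlet

section WeightedSums

variable {f : ℕ → ℝ} {B : ℕ} {h p : ℝ}

lemma abs_sum_range_div_sub_le (hp : B < p) (hf : ∀ b < B, |f b| ≤ h) :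
    |∑ b ∈ Finset.range B, f b / (p - b)| ≤ B * h / (p - B) := by
  have term_le (b : ℕ) (hb : b ∈ Finset.range B) : |f b / (p - b)| ≤ h / (p - B) := by
    have hb := Finset.mem_range.1 hb
    have hb' : (b : ℝ) ≤ B := by exact_mod_cast hb.le
    rw [abs_div, abs_of_pos (by linarith : 0 < p - b)]
    exact div_le_div₀ ((abs_nonneg _).trans (hf b hb)) (hf b hb) (by linarith) (by linarith)
  calc |∑ b ∈ Finset.range B, f b / (p - b)|
      ≤ ∑ b ∈ Finset.range B, |f b / (p - b)| := Finset.abs_sum_le_sum_abs _ _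
    _ ≤ ∑ _b ∈ Finset.range B, h / (p - B) := Finset.sum_le_sum term_le
    _ = B * h / (p - B) := by
      rw [Finset.sum_const, Finset.card_range, nsmul_eq_mul, mul_div_assoc]

lemma abs_sum_range_div_sub_le_of_sum_eq_zero (hp : B < p) (hf : ∀ b < B, |f b| ≤ h)
    (hsum : ∑ b ∈ Finset.range B, f b = 0) :
    |∑ b ∈ Finset.range B, f b / (p - b)| ≤ B * h * (1 / (p - B) - 1 / p) := by
  have subtract_mean : ∑ b ∈ Finset.range B, f b / (p - b) =
      ∑ b ∈ Finset.range B, f b * (1 / (p - b) - 1 / p) := by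
    simp only [mul_sub, Finset.sum_sub_distrib, mul_one_div, ← Finset.sum_div, hsum, zero_div,
      sub_zero]
  have term_le (b : ℕ) (hb : b ∈ Finset.range B) :
      |f b * (1 / (p - b) - 1 / p)| ≤ h * (1 / (p - B) - 1 / p) := by
    have hb := Finset.mem_range.1 hb
    have hb' : (b : ℝ) ≤ B := by exact_mod_cast hb.le
    have lower : 1 / p ≤ 1 / (p - b) := one_div_le_one_div_of_le (by linarith) (by linarith)
    have upper : 1 / (p - b) ≤ 1 / (p - B) := one_div_le_one_div_of_le (by linarith) (by linarith)
    rw [abs_mul, abs_of_nonneg (sub_nonneg.2 lower)]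
    exact mul_le_mul (hf b hb) (by linarith) (by linarith) ((abs_nonneg _).trans (hf b hb))
  calc |∑ b ∈ Finset.range B, f b / (p - b)|
      ≤ ∑ b ∈ Finset.range B, |f b * (1 / (p - b) - 1 / p)| :=
        subtract_mean ▸ Finset.abs_sum_le_sum_abs _ _
    _ ≤ ∑ _b ∈ Finset.range B, h * (1 / (p - B) - 1 / p) := Finset.sum_le_sum term_le
    _ = B * h * (1 / (p - B) - 1 / p) := by
      rw [Finset.sum_const, Finset.card_range, nsmul_eq_mul, mul_assoc]

lemma sum_range_add_div_sub (f : ℕ → ℝ) (p : ℝ) (c d : ℕ) :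
    ∑ j ∈ Finset.range (c + d), f j / (p - j) =
      ∑ j ∈ Finset.range c, f j / (p - j) + ∑ j ∈ Finset.range d, f (c + j) / (p - c - j) := by
  simp only [Finset.sum_range_add, Nat.cast_add, sub_sub]

lemma abs_sum_range_mul_div_sub_le (A : ℕ) (hp : (B * A : ℕ) < p) (hf : ∀ j, |f j| ≤ h)
    (hsum : ∀ a, ∑ b ∈ Finset.range B, f (B * a + b) = 0) :
    |∑ j ∈ Finset.range (B * A), f j / (p - j)| ≤
      B * h * (1 / (p - (B * A : ℕ)) - 1 / p) := by
  induction A with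
  | zero => simp
  | succ A ih =>
    rw [mul_add_one, Nat.cast_add] at hp ⊢
    have last := abs_sum_range_div_sub_le_of_sum_eq_zero (p := p - (B * A : ℕ)) (by linarith)
      (fun b _ => hf (B * A + b)) (hsum A)
    rw [sum_range_add_div_sub, ← sub_sub]
    refine (abs_add_le _ _).trans ((add_le_add (ih (by linarith)) last).trans_eq ?_)
    ring

lemma abs_sum_range_mul_div_sub_le_div (A : ℕ) (hp : (B * A : ℕ) < p) (hf : ∀ j, |f j| ≤ h)
    (hsum : ∀ a, ∑ b ∈ Finset.range B, f (B * a + b) = 0) :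
    |∑ j ∈ Finset.range (B * A), f j / (p - j)| ≤ B * h / (p - (B * A : ℕ)) := by
  have hh : 0 ≤ h := (abs_nonneg _).trans (hf 0)
  have hp0 : 0 ≤ p := (B * A).cast_nonneg.trans hp.le
  refine (abs_sum_range_mul_div_sub_le A hp hf hsum).trans ?_
  rw [div_eq_mul_one_div (_ * h)]
  exact mul_le_mul_of_nonneg_left (sub_le_self _ (by positivity)) (by positivity)

end WeightedSums

section LogSum

lemma logSum_eq_harmonic (n : ℕ) : logSum n = harmonic (n - 1) := by
  simp [logSum, harmonic_eq_sum_Icc]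

lemma logSum_eq_sum_Ico (n : ℕ) : logSum n = ∑ i ∈ Finset.Ico 1 n, (1 : ℝ) / i := by
  have same_index : Finset.Icc 1 (n - 1) = Finset.Ico 1 n := by
    ext i
    simp only [Finset.mem_Icc, Finset.mem_Ico]
    omega
  rw [logSum, same_index]

lemma log_le_logSum {n : ℕ} (hn : n ≠ 0) : Real.log n ≤ logSum n := by
  rw [logSum_eq_harmonic]
  simpa [Nat.sub_add_cancel (Nat.one_le_iff_ne_zero.2 hn)] using log_add_one_le_harmonic (n - 1)

lemma logSum_le_one_add_log (n : ℕ) : logSum n ≤ 1 + Real.log n := by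
  rcases le_or_gt n 1 with hn | hn
  · interval_cases n <;> simp [logSum]
  rw [logSum_eq_harmonic]
  refine (harmonic_le_one_add_log (n - 1)).trans ?_
  gcongr
  · exact_mod_cast Nat.sub_pos_of_lt hn
  · exact n.sub_le 1

end LogSum

section NorlundSum

variable {N m u : ℕ} {x : ℝ}

/-- The unnormalised Nörlund logarithmic kernel `∑_{i=1}^{n-1} D_{n-i}(x) / i`, that is,
`l_n F_n(x)`. -/
def norlundSum (n : ℕ) (x : ℝ) : ℝ := ∑ i ∈ Finset.Ico 1 n, dirichletKernel (n - i) x / i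

lemma abs_FKernel (n : ℕ) (x : ℝ) : |FKernel n x| = |norlundSum n x| / logSum n := by
  have hl : 0 ≤ logSum n := Finset.sum_nonneg fun k _ => by positivity
  unfold FKernel norlundSum
  rw [one_div_mul_eq_div, abs_div, abs_of_nonneg hl]

lemma norlundSum_eq_sum_range (n : ℕ) (x : ℝ) :
    norlundSum n x = ∑ j ∈ Finset.range n, dirichletKernel j x / ((n : ℝ) - j) := by
  rcases n.eq_zero_or_pos with rfl | hn
  · simp [norlundSum]
  have reflect := Finset.sum_Ico_reflect (fun j : ℕ => dirichletKernel j x / ((n : ℝ) - j)) 1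
    n.le_succ
  rw [Nat.add_sub_cancel_left, Nat.add_sub_cancel] at reflect
  rw [Finset.range_eq_Ico, Finset.sum_eq_sum_Ico_succ_bot hn, dirichletKernel_zero, zero_div,
    zero_add, ← reflect]
  refine Finset.sum_congr rfl fun i hi => ?_
  rw [Nat.cast_sub (Finset.mem_Ico.1 hi).2.le, sub_sub_cancel]

lemma mul_logSum_sub_one_le_norlundSum (hx : ∀ k < m, rademacher k x = 1) (hu : u ≤ 2 ^ m) :
    u * (logSum u - 1) ≤ norlundSum u x := by
  have term_eq : ∀ i ∈ Finset.Ico 1 u,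
      dirichletKernel (u - i) x / i = u * (1 / (i : ℝ)) - 1 := fun i hi => by
    have hi := Finset.mem_Ico.1 hi
    have hi0 : (i : ℝ) ≠ 0 := by exact_mod_cast (by omega : i ≠ 0)
    rw [dirichletKernel_eq_natCast hx (by omega), Nat.cast_sub hi.2.le]
    field_simp
  have card_le : ((u - 1 : ℕ) : ℝ) ≤ u := by exact_mod_cast u.sub_le 1
  rw [norlundSum, Finset.sum_congr rfl term_eq, Finset.sum_sub_distrib, ← Finset.mul_sum,
    ← logSum_eq_sum_Ico, Finset.sum_const, Nat.card_Ico, nsmul_one]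
  linarith

lemma norlundSum_two_pow_mul_add (hx : dirichletKernel (2 ^ N) x = 0) (a : ℕ) (hu : u ≤ 2 ^ N) :
    norlundSum (2 ^ N * a + u) x =
      ∑ j ∈ Finset.range (2 ^ N * a), dirichletKernel j x / (((2 ^ N * a + u : ℕ) : ℝ) - j) +
        walsh (2 ^ N * a) x * norlundSum u x := by
  rw [norlundSum_eq_sum_range, sum_range_add_div_sub, norlundSum_eq_sum_range, Finset.mul_sum]
  congr 1
  refine Finset.sum_congr rfl fun k hk => ?_
  rw [dirichletKernel_two_pow_mul_add_of_eq_zero hx a ((Finset.mem_range.1 hk).le.trans hu),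
    mul_div_assoc, Nat.cast_add, add_sub_cancel_left]

-- The `q / 2` full blocks of length `2^(m+2)` have mean zero; the remaining half block is estimated
-- trivially.
lemma abs_sum_range_dirichletKernel_div_sub_le (hm : rademacher m x = -1)
    (hm' : rademacher (m + 1) x = -1) {q : ℕ} (hq : Odd q) {p : ℝ}
    (hp : (2 ^ (m + 1) * q : ℕ) < p) :
    |∑ j ∈ Finset.range (2 ^ (m + 1) * q), dirichletKernel j x / (p - j)| ≤
      2 * 2 ^ m + 2 ^ (m + 1) * 2 ^ m / (p - (2 ^ (m + 1) * q : ℕ)) := by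
  obtain ⟨A, rfl⟩ := hq
  have split_blocks : 2 ^ (m + 1) * (2 * A + 1) = 2 ^ (m + 2) * A + 2 ^ (m + 1) := by ring
  rw [split_blocks, Nat.cast_add] at hp
  have vanish := dirichletKernel_two_pow_succ_eq_zero hm
  have bound := abs_dirichletKernel_le_two_pow vanish
  have hpow : (0 : ℝ) < (2 ^ (m + 1) : ℕ) := by positivity
  have full_blocks := abs_sum_range_mul_div_sub_le_div (p := p) (B := 2 ^ (m + 2)) A (by linarith)
    bound (sum_block_dirichletKernel_eq_zero vanish hm')
  have full_blocks_le :
      ((2 ^ (m + 2) : ℕ) : ℝ) * 2 ^ m / (p - (2 ^ (m + 2) * A : ℕ)) ≤ 2 * 2 ^ m := by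
    rw [div_le_iff₀ (by linarith)]
    calc ((2 ^ (m + 2) : ℕ) : ℝ) * 2 ^ m = 2 * 2 ^ m * (2 ^ (m + 1) : ℕ) := by
          push_cast
          ring
      _ ≤ _ := by
          gcongr
          linarith
  have half_block := abs_sum_range_div_sub_le (p := p - (2 ^ (m + 2) * A : ℕ)) (by linarith)
    fun b (_ : b < 2 ^ (m + 1)) => bound (2 ^ (m + 2) * A + b)
  rw [split_blocks, sum_range_add_div_sub, Nat.cast_add, ← sub_sub]
  refine (abs_add_le _ _).trans (add_le_add (full_blocks.trans full_blocks_le) ?_)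
  simpa using half_block

lemma mul_logSum_sub_le_abs_norlundSum (hx : ∀ k < m, rademacher k x = 1)
    (hm : rademacher m x = -1) (hm' : rademacher (m + 1) x = -1) {q : ℕ} (hq : Odd q)
    (hu : u ≤ 2 ^ m) (hu' : 2 ^ m ≤ 2 * u) :
    u * (logSum u - 13) ≤ |norlundSum (2 ^ (m + 1) * q + u) x| := by
  have hpow : (0 : ℝ) < 2 ^ m := by positivity
  have hu'' : (2 : ℝ) ^ m ≤ 2 * u := by exact_mod_cast hu'
  have hu0 : (0 : ℝ) < u := by linarith
  have tail := mul_logSum_sub_one_le_norlundSum hx hu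
  have head := abs_sum_range_dirichletKernel_div_sub_le hm hm' hq
    (p := ((2 ^ (m + 1) * q + u : ℕ) : ℝ)) (by push_cast; linarith)
  have half_block_le : (2 : ℝ) ^ (m + 1) * 2 ^ m / u ≤ 8 * u := by
    rw [div_le_iff₀ hu0, pow_succ]
    nlinarith
  rw [Nat.cast_add, add_sub_cancel_left, ← Nat.cast_add] at head
  rw [norlundSum_two_pow_mul_add (dirichletKernel_two_pow_succ_eq_zero hm) q
    (hu.trans (Nat.pow_le_pow_right two_pos m.le_succ)), add_comm]
  calc u * (logSum u - 13) ≤ |norlundSum u x| - 12 * u := by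
        linarith [le_abs_self (norlundSum u x)]
    _ ≤ |walsh (2 ^ (m + 1) * q) x * norlundSum u x| - _ := by
        rw [abs_mul, abs_walsh, one_mul]
        exact sub_le_sub_left (head.trans (by linarith)) _
    _ ≤ _ := abs_sub_abs_le_abs_add _ _

end NorlundSum

section DyadicIntervals

variable {m k : ℕ} {x : ℝ}

/-- The top quarter of the dyadic interval `[0, 2^{-m})`: the points whose binary expansion begins
with exactly `m` zeros followed by two ones. -/
def topQuarter (m : ℕ) : Set ℝ := Set.Ico (3 / 4 / 2 ^ m) (1 / 2 ^ m)

lemma topQuarter_subset_Ico (m : ℕ) : topQuarter m ⊆ Set.Ico 0 (1 / 2 ^ m) :=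
  Set.Ico_subset_Ico_left (by positivity)

lemma Ico_zero_one_div_two_pow_subset (m : ℕ) : Set.Ico (0 : ℝ) (1 / 2 ^ m) ⊆ Set.Ico 0 1 :=
  Set.Ico_subset_Ico_right (div_le_one_of_le₀ (one_le_pow₀ one_le_two) (by positivity))

lemma volume_real_topQuarter (m : ℕ) : volume.real (topQuarter m) = 1 / 4 / 2 ^ m := by
  rw [topQuarter, Real.volume_real_Ico_of_le (by gcongr; norm_num)]
  ring

lemma pairwise_disjoint_topQuarter : Pairwise (Function.onFun Disjoint topQuarter) := by
  refine (pairwise_disjoint_on topQuarter).2 fun s t hst => ?_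
  refine Set.disjoint_left.2 fun x hs ht => (ht.2.trans_le ?_).not_ge hs.1
  have hpow : (2 : ℝ) ^ (s + 1) ≤ 2 ^ t := pow_le_pow_right₀ one_le_two hst
  rw [div_div, div_le_div_iff₀ (by positivity) (by positivity)]
  linarith [pow_succ (2 : ℝ) s, pow_pos (two_pos (α := ℝ)) s]

lemma rademacher_eq_one_of_mem_Ico (hx : x ∈ Set.Ico (0 : ℝ) (1 / 2 ^ m)) (hk : k < m) :
    rademacher k x = 1 := by
  have hx0 : 0 ≤ 2 ^ k * x := mul_nonneg (by positivity) hx.1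
  have hlt : x * 2 ^ m < 1 := (lt_div_iff₀ (by positivity)).1 hx.2
  have hpow : (2 : ℝ) ^ (k + 1) * x ≤ 2 ^ m * x :=
    mul_le_mul_of_nonneg_right (pow_le_pow_right₀ one_le_two hk) hx.1
  have half : 2 ^ k * x < 1 / 2 := by
    rw [pow_succ] at hpow
    linarith
  rw [rademacher, r0, Int.fract_eq_self.2 ⟨hx0, by linarith⟩, if_pos half]

lemma mul_two_pow_mem_of_mem_topQuarter (hx : x ∈ topQuarter m) :
    2 ^ m * x ∈ Set.Ico (3 / 4 : ℝ) 1 := by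
  have hpow : (0 : ℝ) < 2 ^ m := by positivity
  exact ⟨(div_le_iff₀' hpow).1 hx.1, (lt_div_iff₀' hpow).1 hx.2⟩

lemma rademacher_of_mem_topQuarter (hx : x ∈ topQuarter m) : rademacher m x = -1 := by
  obtain ⟨lower, upper⟩ := mul_two_pow_mem_of_mem_topQuarter hx
  rw [rademacher, r0, Int.fract_eq_self.2 ⟨by linarith, upper⟩, if_neg (by linarith)]

lemma rademacher_succ_of_mem_topQuarter (hx : x ∈ topQuarter m) :
    rademacher (m + 1) x = -1 := by
  obtain ⟨lower, upper⟩ := mul_two_pow_mem_of_mem_topQuarter hx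
  have fract_eq : Int.fract (2 ^ (m + 1) * x) = 2 * (2 ^ m * x) - 1 :=
    Int.fract_eq_iff.2 ⟨by linarith, by linarith, 1, by push_cast; ring⟩
  rw [rademacher, r0, fract_eq, if_neg (by linarith)]

end DyadicIntervals

section Index

lemma pIdx_succ (n : ℕ) : pIdx (n + 1) = pIdx n + 4 ^ (n + 1) := Finset.sum_range_succ _ _

lemma pIdx_add_one_add (t d : ℕ) : pIdx (t + 1 + d) = 4 ^ (t + 1) * pIdx d + pIdx t := by
  unfold pIdx
  rw [add_assoc, Finset.sum_range_add, add_comm, Finset.mul_sum]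
  simp only [pow_add]

lemma odd_pIdx (n : ℕ) : Odd (pIdx n) := by
  induction n with
  | zero => exact odd_one
  | succ n ih => exact pIdx_succ n ▸ ih.add_even (Nat.even_pow.2 ⟨by decide, n.succ_ne_zero⟩)

lemma four_pow_le_pIdx (n : ℕ) : 4 ^ n ≤ pIdx n :=
  Finset.single_le_sum (fun _ _ => Nat.zero_le _) (Finset.self_mem_range_succ n)

lemma pIdx_le_two_mul_four_pow (n : ℕ) : pIdx n ≤ 2 * 4 ^ n := by
  induction n with
  | zero => simp [pIdx]
  | succ n ih =>
    rw [pIdx_succ, pow_succ]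
    omega

lemma two_pow_two_mul_add_one (R : Type*) [CommSemiring R] (t : ℕ) :
    (2 : R) ^ (2 * t + 1) = 2 * 4 ^ t := by
  rw [pow_succ', pow_mul]
  norm_num

lemma log_four_mem_Icc : Real.log 4 ∈ Set.Icc (4 / 3) (3 / 2) := by
  have log_four : Real.log 4 = 2 * Real.log 2 := by
    rw [show (4 : ℝ) = 2 ^ 2 by norm_num, Real.log_pow, Nat.cast_two]
  constructor <;> linarith [Real.log_two_gt_d9, Real.log_two_lt_d9]

lemma mul_four_thirds_le_logSum_pIdx (n : ℕ) : n * (4 / 3) ≤ logSum (pIdx n) :=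
  calc n * (4 / 3) ≤ n * Real.log 4 := by gcongr; exact log_four_mem_Icc.1
    _ = Real.log (4 ^ n) := by rw [Real.log_pow]
    _ ≤ Real.log (pIdx n) :=
      Real.log_le_log (by positivity) (by exact_mod_cast four_pow_le_pIdx n)
    _ ≤ logSum (pIdx n) := log_le_logSum (odd_pIdx n).pos.ne'

lemma logSum_pIdx_le {n : ℕ} (hn : n ≠ 0) : logSum (pIdx n) ≤ 4 * n := by
  have pIdx_le : pIdx n ≤ 4 ^ (n + 1) := by
    have := pIdx_le_two_mul_four_pow n
    rw [pow_succ]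
    omega
  have hn' : (1 : ℝ) ≤ n := by exact_mod_cast Nat.one_le_iff_ne_zero.2 hn
  calc logSum (pIdx n) ≤ 1 + Real.log (pIdx n) := logSum_le_one_add_log _
    _ ≤ 1 + Real.log (4 ^ (n + 1)) := by
      gcongr
      · exact_mod_cast (odd_pIdx n).pos
      · exact_mod_cast pIdx_le
    _ = 1 + (n + 1) * Real.log 4 := by rw [Real.log_pow]; push_cast; rfl
    _ ≤ 1 + (n + 1) * (3 / 2) := by gcongr; exact log_four_mem_Icc.2
    _ ≤ 4 * n := by linarith

end Index

section Pointwise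

variable {n t : ℕ} {x : ℝ}

lemma pIdx_div_four_le_abs_FKernel (hn : n ≠ 0) (hx : x ∈ Set.Ico (0 : ℝ) (1 / 2 ^ (2 * n + 1))) :
    (pIdx n : ℝ) / 4 ≤ |FKernel (pIdx n) x| := by
  have hu : pIdx n ≤ 2 ^ (2 * n + 1) :=
    (pIdx_le_two_mul_four_pow n).trans_eq (two_pow_two_mul_add_one ℕ n).symm
  have hl : 4 / 3 ≤ logSum (pIdx n) := by
    have hn' : (1 : ℝ) ≤ n := by exact_mod_cast Nat.one_le_iff_ne_zero.2 hn
    linarith [mul_four_thirds_le_logSum_pIdx n]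
  rw [abs_FKernel, le_div_iff₀ (by linarith)]
  calc (pIdx n : ℝ) / 4 * logSum (pIdx n) ≤ pIdx n * (logSum (pIdx n) - 1) := by
        rw [div_mul_eq_mul_div, mul_div_assoc]
        gcongr
        linarith
    _ ≤ norlundSum (pIdx n) x :=
        mul_logSum_sub_one_le_norlundSum (fun k => rademacher_eq_one_of_mem_Ico hx) hu
    _ ≤ |norlundSum (pIdx n) x| := le_abs_self _

lemma mul_logSum_sub_le_abs_norlundSum_pIdx (ht : t < n) (hx : x ∈ topQuarter (2 * t + 1)) :
    pIdx t * (logSum (pIdx t) - 13) ≤ |norlundSum (pIdx n) x| := by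
  obtain ⟨d, rfl⟩ := Nat.exists_eq_add_of_le (Nat.succ_le_of_lt ht)
  have four_pow : 4 ^ (t + 1) = 2 ^ (2 * t + 1 + 1) := (pow_mul 2 2 (t + 1)).symm
  have lower := four_pow_le_pIdx t
  have upper := pIdx_le_two_mul_four_pow t
  rw [pIdx_add_one_add, four_pow]
  exact mul_logSum_sub_le_abs_norlundSum
    (fun k => rademacher_eq_one_of_mem_Ico (topQuarter_subset_Ico _ hx))
    (rademacher_of_mem_topQuarter hx) (rademacher_succ_of_mem_topQuarter hx) (odd_pIdx d)
    (by rwa [two_pow_two_mul_add_one]) (by rw [two_pow_two_mul_add_one]; omega)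

lemma four_pow_mul_sub_div_le_abs_FKernel (ht : t < n) (hx : x ∈ topQuarter (2 * t + 1)) :
    4 ^ t * ((t : ℝ) - 13) / (4 * n) ≤ |FKernel (pIdx n) x| := by
  rcases le_total (t : ℝ) 13 with small | large
  · refine le_trans ?_ (abs_nonneg _)
    exact div_nonpos_of_nonpos_of_nonneg
      (mul_nonpos_of_nonneg_of_nonpos (by positivity) (by linarith)) (by positivity)
  have hn : (0 : ℝ) < n := by exact_mod_cast t.zero_le.trans_lt ht
  have hl := mul_four_thirds_le_logSum_pIdx t
  rw [abs_FKernel]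
  refine div_le_div₀ (abs_nonneg _) ?_ ?_ (logSum_pIdx_le (by omega))
  · refine le_trans ?_ (mul_logSum_sub_le_abs_norlundSum_pIdx ht hx)
    exact mul_le_mul (by exact_mod_cast four_pow_le_pIdx t) (by linarith) (by linarith)
      (by positivity)
  · exact lt_of_lt_of_le (by positivity) (mul_four_thirds_le_logSum_pIdx n)

end Pointwise

section Integrals

lemma measurable_rademacher (n : ℕ) : Measurable (rademacher n) := by
  have measurable_r0 : Measurable r0 := Measurable.ite
    (measurableSet_lt measurable_fract measurable_const) measurable_const measurable_const
  exact measurable_r0.comp (measurable_const_mul _)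

lemma measurable_walsh (n : ℕ) : Measurable (walsh n) := by
  refine Finset.measurable_fun_prod _ fun k _ => ?_
  split_ifs
  · exact measurable_rademacher k
  · exact measurable_const

lemma integrableOn_walsh (n : ℕ) : IntegrableOn (walsh n) (Set.Ico 0 1) :=
  Measure.integrableOn_of_bounded (M := 1) (by simp) (measurable_walsh n).aestronglyMeasurable
    (.of_forall fun x => (abs_walsh n x).le)

lemma integrableOn_FKernel (n : ℕ) : IntegrableOn (FKernel n) (Set.Ico 0 1) :=
  Integrable.const_mul (integrable_finsetSum _ fun _ _ =>
    Integrable.div_const (integrable_finsetSum _ fun k _ => integrableOn_walsh k) _) _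

lemma sum_mul_measureReal_le_setIntegral {α ι : Type*} [MeasurableSpace α] {μ : Measure α}
    {f : α → ℝ} {S : Set α} (hf : IntegrableOn f S μ) (hf0 : 0 ≤ f) (s : Finset ι) {E : ι → Set α}
    (hE : ∀ i ∈ s, MeasurableSet (E i)) (hES : ∀ i ∈ s, E i ⊆ S)
    (hμ : ∀ i ∈ s, μ (E i) ≠ ⊤) (hdisj : (s : Set ι).Pairwise (Function.onFun Disjoint E))
    {c : ι → ℝ} (hc : ∀ i ∈ s, ∀ x ∈ E i, c i ≤ f x) :
    ∑ i ∈ s, c i * μ.real (E i) ≤ ∫ x in S, f x ∂μ :=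
  calc ∑ i ∈ s, c i * μ.real (E i)
      ≤ ∑ i ∈ s, ∫ x in E i, f x ∂μ := Finset.sum_le_sum fun i hi =>
        setIntegral_ge_of_const_le_real (hE i hi) (hμ i hi) (hc i hi) (hf.mono_set (hES i hi))
    _ = ∫ x in ⋃ i ∈ s, E i, f x ∂μ :=
        (integral_biUnion_finset s hE hdisj fun i hi => hf.mono_set (hES i hi)).symm
    _ ≤ ∫ x in S, f x ∂μ := setIntegral_mono_set hf (.of_forall hf0)
        (Set.iUnion₂_subset hES).eventuallyLE

lemma one_eighth_le_integral_abs_FKernel {n : ℕ} (hn : n ≠ 0) :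
    1 / 8 ≤ ∫ x in Set.Ico (0 : ℝ) 1, |FKernel (pIdx n) x| := by
  have hp : (4 : ℝ) ^ n ≤ pIdx n := by exact_mod_cast four_pow_le_pIdx n
  have bound := sum_mul_measureReal_le_setIntegral (integrableOn_FKernel (pIdx n)).abs
    (fun x => abs_nonneg _) {2 * n + 1} (E := fun m => Set.Ico (0 : ℝ) (1 / 2 ^ m))
    (fun _ _ => measurableSet_Ico) (fun m _ => Ico_zero_one_div_two_pow_subset m) (by simp)
    (by simp) (c := fun _ => (pIdx n : ℝ) / 4)
    (by simpa using fun x => pIdx_div_four_le_abs_FKernel hn)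
  refine le_trans ?_ bound
  rw [Finset.sum_singleton, Real.volume_real_Ico_of_le (by positivity), sub_zero,
    two_pow_two_mul_add_one, mul_one_div, le_div_iff₀ (by positivity)]
  linarith

lemma sub_div_le_integral_abs_FKernel {n : ℕ} (hn : n ≠ 0) :
    ((n : ℝ) - 27) / 64 ≤ ∫ x in Set.Ico (0 : ℝ) 1, |FKernel (pIdx n) x| := by
  have hn0 : (n : ℝ) ≠ 0 := by exact_mod_cast hn
  have index_injective : Function.Injective fun t : ℕ => 2 * t + 1 := fun s t h => by
    simpa using h
  have bound := sum_mul_measureReal_le_setIntegral (integrableOn_FKernel (pIdx n)).abs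
    (fun x => abs_nonneg _) (Finset.range n) (E := fun t => topQuarter (2 * t + 1))
    (fun _ _ => measurableSet_Ico)
    (fun t _ => (topQuarter_subset_Ico _).trans (Ico_zero_one_div_two_pow_subset _))
    (fun _ _ => measure_Ico_lt_top.ne)
    (fun s _ t _ hst => pairwise_disjoint_topQuarter (index_injective.ne hst))
    fun t ht x hx => four_pow_mul_sub_div_le_abs_FKernel (Finset.mem_range.1 ht) hx
  have term_eq (t : ℕ) : 4 ^ t * ((t : ℝ) - 13) / (4 * n) * volume.real (topQuarter (2 * t + 1)) =
      ((t : ℝ) - 13) / (32 * n) := by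
    rw [volume_real_topQuarter, two_pow_two_mul_add_one]
    field_simp
    ring
  have gauss_sum : ∑ t ∈ Finset.range n, (t : ℝ) = n * (n - 1) / 2 := by
    rw [eq_div_iff two_ne_zero, ← Nat.cast_pred (Nat.pos_of_ne_zero hn), ← Nat.cast_sum]
    exact_mod_cast Finset.sum_range_id_mul_two n
  refine le_of_eq_of_le ?_ bound
  simp only [term_eq]
  rw [← Finset.sum_div, Finset.sum_sub_distrib, gauss_sum, Finset.sum_const, Finset.card_range,
    nsmul_eq_mul]
  field_simp
  ring

end Integrals

theorem stmt13_general : ∃ c > (0:ℝ), ∀ n : ℕ,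
    c * n ≤ ∫ x in Set.Ico (0:ℝ) 1, |FKernel (pIdx n) x| := by
  refine ⟨1 / 432, by norm_num, fun n => ?_⟩
  rcases eq_or_ne n 0 with rfl | hn
  · simpa using integral_nonneg fun x => abs_nonneg (FKernel (pIdx 0) x)
  · rcases le_total (n : ℝ) 54 with small | large
    · linarith [one_eighth_le_integral_abs_FKernel hn]
    · linarith [sub_div_le_integral_abs_FKernel hn]

/-- `L^1` lower bound for the Nörlund logarithmic kernel:
`∫_0^1 |F_{p_n}| ≥ c·n` for `n ≥ m₀`. -/
theorem stmt13 : ∃ c > (0:ℝ), ∀ n : ℕ, m₀ ≤ n →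
    c * n ≤ ∫ x in Set.Ico (0:ℝ) 1, |FKernel (pIdx n) x| :=
  let ⟨c, hc, bound⟩ := stmt13_general
  ⟨c, hc, fun n _ => bound n⟩

end
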